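/- For every integer t ≥ 3, regarding F_2[w_2,w_3] as a subring of F_2[w_2,w_3,w_4], one has I_{2^t,3} = I_{2^t,4} ∩ F_2[w_2,w_3]; that is, a polynomial in the variables w_2, w_3 alone lies in I_{2^t,4} if and only if it lies in I_{2^t,3}. -/

import Mathlib

open MvPolynomial

/-- The polynomials `g_r = g_r^{(4)}` in `F_2[w_2,w_3,w_4]` (variables `X 0 = w_2`,
`X 1 = w_3`, `X 2 = w_4`): `g_0 = 1`, `g_r = 0` for `r < 0`, and
`g_r = w_2·g_{r-2} + w_3·g_{r-3} + w_4·g_{r-4}` for `r ≥ 1`. -/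
noncomputable def g4 : ℤ → MvPolynomial (Fin 3) (ZMod 2)
  | r =>
    if r ≤ 0 then (if r = 0 then 1 else 0)
    else X 0 * g4 (r - 2) + X 1 * g4 (r - 3) + X 2 * g4 (r - 4)
  termination_by r => r.toNat
  decreasing_by all_goals omega

/-- The ideal `I_{n,4} = (g_{n-3}, g_{n-2}, g_{n-1}, g_n)` of `F_2[w_2,w_3,w_4]`. -/
noncomputable def I4 (n : ℤ) : Ideal (MvPolynomial (Fin 3) (ZMod 2)) :=
  Ideal.span {g4 (n - 3), g4 (n - 2), g4 (n - 1), g4 n}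

/-- The polynomials `g_r^{(3)}` in `F_2[w_2,w_3]` (variables `X 0 = w_2`, `X 1 = w_3`):
`g^{(3)}_0 = 1`, `g^{(3)}_r = 0` for `r < 0`, and
`g^{(3)}_r = w_2·g^{(3)}_{r-2} + w_3·g^{(3)}_{r-3}` for `r ≥ 1`. -/
noncomputable def g3 : ℤ → MvPolynomial (Fin 2) (ZMod 2)
  | r =>
    if r ≤ 0 then (if r = 0 then 1 else 0)
    else X 0 * g3 (r - 2) + X 1 * g3 (r - 3)
  termination_by r => r.toNat
  decreasing_by all_goals omega

/-- The ideal `I_{n,3} = (g^{(3)}_{n-2}, g^{(3)}_{n-1}, g^{(3)}_n)` of `F_2[w_2,w_3]`. -/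
noncomputable def I3 (n : ℤ) : Ideal (MvPolynomial (Fin 2) (ZMod 2)) :=
  Ideal.span {g3 (n - 2), g3 (n - 1), g3 n}

/-- The natural inclusion `F_2[w_2,w_3] ⊆ F_2[w_2,w_3,w_4]`. -/
noncomputable def incl : MvPolynomial (Fin 2) (ZMod 2) →+* MvPolynomial (Fin 3) (ZMod 2) :=
  (rename (Fin.castSucc : Fin 2 → Fin 3)).toRingHom

theorem aux_double {R : Type*} [CommRing R] (h2 : (2 : R) = 0) (a b c : R) (G : ℤ → R)
    (hneg : ∀ r, r < 0 → G r = 0) (h0 : G 0 = 1)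
    (hrec : ∀ r, 0 < r → G r = a * G (r - 2) + b * G (r - 3) + c * G (r - 4)) (k : ℕ) :
    ∀ m : ℤ, m < k → G (2 * m + 1) = b * G (m - 1) ^ 2 ∧
      G (2 * m) = G m ^ 2 + a * G (m - 1) ^ 2 + c * G (m - 2) ^ 2 := by
  induction k with
  | zero =>
    intro m hm
    have hm' : m < 0 := by simpa using hm
    rw [hneg (2 * m + 1) (by omega), hneg (m - 1) (by omega), hneg (2 * m) (by omega),
      hneg m hm', hneg (m - 2) (by omega)]
    simp
  | succ k ih =>
    intro m hm
    push_cast at hm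
    by_cases hk : m < k
    · exact ih m hk
    have hmk : m = k := by omega
    obtain ⟨o1, e1⟩ := ih (m - 1) (by omega)
    obtain ⟨o2, e2⟩ := ih (m - 2) (by omega)
    rw [show 2 * (m - 1) + 1 = 2 * m - 1 by ring, show m - 1 - 1 = m - 2 by ring] at o1
    rw [show 2 * (m - 2) + 1 = 2 * m - 3 by ring, show m - 2 - 1 = m - 3 by ring] at o2
    rw [show 2 * (m - 1) = 2 * m - 2 by ring, show m - 1 - 1 = m - 2 by ring,
      show m - 1 - 2 = m - 3 by ring] at e1
    rw [show 2 * (m - 2) = 2 * m - 4 by ring, show m - 2 - 1 = m - 3 by ring,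
      show m - 2 - 2 = m - 4 by ring] at e2
    constructor
    · rw [hrec (2 * m + 1) (by omega), show 2 * m + 1 - 2 = 2 * m - 1 by ring,
        show 2 * m + 1 - 3 = 2 * m - 2 by ring, show 2 * m + 1 - 4 = 2 * m - 3 by ring, o1, o2, e1]
      linear_combination (a * b * G (m - 2) ^ 2 + b * c * G (m - 3) ^ 2) * h2
    · by_cases hz : m = 0
      · subst hz
        simp [h0, hneg]
      · rw [hrec (2 * m) (by omega), o2, e1, e2, hrec m (by omega)]
        linear_combination (a * c * G (m - 3) ^ 2 - a * G (m - 2) * b * G (m - 3)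
          - a * G (m - 2) * c * G (m - 4) - b * G (m - 3) * c * G (m - 4)) * h2

theorem aux_pow {R : Type*} [CommRing R] (h2 : (2 : R) = 0) (a b c : R) (G H : ℤ → R)
    (hneg : ∀ r, r < 0 → G r = 0) (h0 : G 0 = 1)
    (hrec : ∀ r, 0 < r → G r = a * G (r - 2) + b * G (r - 3) + c * G (r - 4))
    (hneg' : ∀ r, r < 0 → H r = 0) (h0' : H 0 = 1)
    (hrec' : ∀ r, 0 < r → H r = a * H (r - 2) + b * H (r - 3)) (t : ℕ) :
    G (2 ^ (t + 1) - 3) = 0 ∧ H (2 ^ (t + 1) - 3) = 0 ∧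
    G (2 ^ (t + 1) - 2) = H (2 ^ (t + 1) - 2) ∧ G (2 ^ (t + 1) - 1) = H (2 ^ (t + 1) - 1) := by
  induction t with
  | zero =>
    norm_num
    refine ⟨hneg _ (by norm_num), hneg' _ (by norm_num), by rw [h0, h0'], ?_⟩
    rw [hrec 1 (by norm_num), hrec' 1 (by norm_num)]
    simp [hneg, hneg']
  | succ t ih =>
    obtain ⟨i1, i2, i3, i4⟩ := ih
    have dG := fun m : ℤ => aux_double h2 a b c G hneg h0 hrec (m.toNat + 1) m (by omega)
    have dH := fun m : ℤ => aux_double h2 a b 0 H hneg' h0'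
      (fun r hr => by rw [hrec' r hr]; ring) (m.toNat + 1) m (by omega)
    have hp : (2 : ℤ) ^ (t + 1 + 1) = 2 * 2 ^ (t + 1) := by ring
    rw [hp]
    generalize (2 : ℤ) ^ (t + 1) = N at *
    have g1 := dG (N - 1)
    have g2 := dG (N - 2)
    have k1 := dH (N - 1)
    have k2 := dH (N - 2)
    rw [show 2 * (N - 1) + 1 = 2 * N - 1 by ring, show 2 * (N - 1) = 2 * N - 2 by ring,
      show N - 1 - 1 = N - 2 by ring, show N - 1 - 2 = N - 3 by ring] at g1 k1
    rw [show 2 * (N - 2) + 1 = 2 * N - 3 by ring, show N - 2 - 1 = N - 3 by ring] at g2 k2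
    rw [g1.1, g1.2, g2.1, k1.1, k1.2, k2.1, i1, i2, i3, i4]
    simp

theorem g4_neg (r : ℤ) (h : r < 0) : g4 r = 0 := by
  rw [g4, if_pos h.le, if_neg h.ne]
theorem g4_zero : g4 0 = 1 := by
  rw [g4]; simp
theorem g4_rec (r : ℤ) (h : 0 < r) :
    g4 r = X 0 * g4 (r - 2) + X 1 * g4 (r - 3) + X 2 * g4 (r - 4) := by
  rw [g4, if_neg (by omega)]
theorem g3_neg (r : ℤ) (h : r < 0) : g3 r = 0 := by
  rw [g3, if_pos h.le, if_neg h.ne]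
theorem g3_zero : g3 0 = 1 := by
  rw [g3]; simp
theorem g3_rec (r : ℤ) (h : 0 < r) :
    g3 r = X 0 * g3 (r - 2) + X 1 * g3 (r - 3) := by
  rw [g3, if_neg (by omega)]

theorem incl_X0 : incl (X 0) = X 0 := by simp [incl]
theorem incl_X1 : incl (X 1) = X 1 := by simp [incl]

/-- Setting `w_4 = 0`. -/
noncomputable def phi : MvPolynomial (Fin 3) (ZMod 2) →ₐ[ZMod 2] MvPolynomial (Fin 2) (ZMod 2) :=
  aeval ![X 0, X 1, 0]

theorem phi_incl (p : MvPolynomial (Fin 2) (ZMod 2)) : phi (incl p) = p := by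
  have : phi.comp (rename (Fin.castSucc : Fin 2 → Fin 3)) = AlgHom.id _ _ := by
    ext i : 1
    fin_cases i <;> simp [phi]
  exact DFunLike.congr_fun this p

theorem phi_g4 (k : ℕ) : ∀ r : ℤ, r < k → phi (g4 r) = g3 r := by
  induction k with
  | zero =>
    intro r hr
    have hr' : r < 0 := by simpa using hr
    rw [g4_neg r hr', g3_neg r hr', map_zero]
  | succ k ih =>
    intro r hr
    push_cast at hr
    rcases lt_trichotomy r 0 with h | h | h
    · rw [g4_neg r h, g3_neg r h, map_zero]
    · subst h
      rw [g4_zero, g3_zero, map_one]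
    · rw [g4_rec r h, g3_rec r h, ← ih (r - 2) (by omega), ← ih (r - 3) (by omega)]
      simp [phi]

theorem stmt_keys (t : ℕ) (ht : 3 ≤ t) :
    incl (g3 (2 ^ t - 3)) = 0 ∧ g4 (2 ^ t - 2) = incl (g3 (2 ^ t - 2)) ∧
      g4 (2 ^ t - 1) = incl (g3 (2 ^ t - 1)) := by
  obtain ⟨s, rfl⟩ : ∃ s, t = s + 1 := ⟨t - 1, by omega⟩
  have := aux_pow (R := MvPolynomial (Fin 3) (ZMod 2)) CharTwo.two_eq_zero (X 0) (X 1) (X 2) g4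
    (fun r => incl (g3 r)) g4_neg g4_zero g4_rec
    (fun r h => by rw [g3_neg r h, map_zero]) (by rw [g3_zero, map_one])
    (fun r h => by rw [g3_rec r h]; simp only [map_add, map_mul, incl_X0, incl_X1]) s
  exact this.2

/-- For every integer `t ≥ 3`, regarding `F_2[w_2,w_3]` as a subring of `F_2[w_2,w_3,w_4]`,
one has `I_{2^t,3} = I_{2^t,4} ∩ F_2[w_2,w_3]`: a polynomial in `w_2, w_3` alone lies in
`I_{2^t,4}` if and only if it lies in `I_{2^t,3}`. -/
theorem stmt2 (t : ℕ) (ht : 3 ≤ t) :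
    Ideal.comap incl (I4 (2 ^ t)) = I3 (2 ^ t) := by
  obtain ⟨k0, k1, k2⟩ := stmt_keys t ht
  have k0' : g3 (2 ^ t - 3) = 0 := by
    rw [← phi_incl (g3 (2 ^ t - 3)), k0, map_zero]
  have hpos : (0 : ℤ) < 2 ^ t := by positivity
  have hphi : ∀ r, phi (g4 r) = g3 r := fun r => phi_g4 (r.toNat + 1) r (by omega)
  apply le_antisymm
  · intro p hp
    have hp' : incl p ∈ I4 (2 ^ t) := hp
    have h1 : I4 (2 ^ t) ≤ Ideal.comap phi (I3 (2 ^ t)) := by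
      rw [I4, Ideal.span_le]
      rintro x (rfl | rfl | rfl | rfl) <;>
        rw [SetLike.mem_coe, Ideal.mem_comap, hphi]
      · rw [k0']; exact zero_mem _
      all_goals exact Ideal.subset_span (by simp)
    have h2 := h1 hp'
    rwa [Ideal.mem_comap, phi_incl] at h2
  · have m1 : incl (g3 (2 ^ t - 2)) ∈ I4 (2 ^ t) := by
      rw [← k1]; exact Ideal.subset_span (by simp)
    have m2 : incl (g3 (2 ^ t - 1)) ∈ I4 (2 ^ t) := by
      rw [← k2]; exact Ideal.subset_span (by simp)
    rw [I3, Ideal.span_le]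
    rintro x (rfl | rfl | rfl) <;> rw [SetLike.mem_coe, Ideal.mem_comap]
    · exact m1
    · exact m2
    · rw [g3_rec _ hpos, k0', mul_zero, add_zero, map_mul]
      exact Ideal.mul_mem_left _ _ m1
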